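/- In the semiring StackOp_Σ, every monomial (finite ⊗-product of generators pop_x, push_x) is either equal to 0 or equal to a product of the form pop_{u₁} ⊗ ⋯ ⊗ pop_{u_n} ⊗ push_{v_m} ⊗ ⋯ ⊗ push_{v₁} for some n, m ≥ 0 and u₁, …, u_n, v₁, …, v_m ∈ Σ; in particular every reduced monomial has this pops-then-pushes form. -/

import Mathlib

/-- in the idempotent semiring `StackOp_Σ` — equivalently, in any
idempotent semiring equipped with elements `pop x`, `push x` (`x ∈ Σ`)
satisfying the defining relations `push x ⊗ pop x = 1` and
`push x ⊗ pop y = 0` for `x ≠ y` — every monomial (finite ⊗-product of the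
generators, with `Sum.inl x` interpreted as `pop x` and `Sum.inr x` as
`push x`) is either equal to `0` or equal to a product of the form
`pop u₁ ⊗ ⋯ ⊗ pop uₙ ⊗ push vₘ ⊗ ⋯ ⊗ push v₁`; in particular every reduced
monomial has this pops-then-pushes form. -/
theorem stackOp_monomial_eq_zero_or_pops_then_pushes
    {S : Type} (R : Type) [Semiring R] (hidem : ∀ a : R, a + a = a)
    (pop push : S → R)
    (hunit : ∀ x : S, push x * pop x = 1)
    (hzero : ∀ x y : S, x ≠ y → push x * pop y = 0)
    (w : List (S ⊕ S)) :
    (w.map (Sum.elim pop push)).prod = 0 ∨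
      ∃ us vs : List S,
        (w.map (Sum.elim pop push)).prod =
          (us.map pop).prod * (vs.map push).prod := by
  induction w with
  | nil => exact Or.inr ⟨[], [], by simp⟩
  | cons g w ih =>
    rw [List.map_cons, List.prod_cons]
    rcases ih with h | ⟨us, vs, h⟩
    · exact Or.inl (by rw [h, mul_zero])
    rw [h]
    rcases g with x | x
    · exact Or.inr ⟨x :: us, vs, by simp [mul_assoc]⟩
    rcases us with _ | ⟨y, us⟩
    · exact Or.inr ⟨[], x :: vs, by simp⟩
    by_cases hxy : x = y
    · subst hxy
      exact Or.inr ⟨us, vs, by simp [← mul_assoc, hunit]⟩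
    · exact Or.inl (by simp [← mul_assoc, hzero x y hxy])
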